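/- arXiv:2102.06275 — 3 statements merged into one kernel-verified Lean document; each statement's English description precedes it below -/
import Mathlib

section
/- In any category C and for any objects a and b, the map sending an isomorphism φ : a ≅ b to the triple of families (f ↦ φ.hom ∘ f, g ↦ g ∘ φ.inv, h ↦ φ.hom ∘ h ∘ φ.inv) is a bijection from the set of isomorphisms from a to b onto the set of indiscernibilities from a to b. -/
open CategoryTheory

universe v u

variable {C : Type u} [Category.{v} C]

/-- An indiscernibility from `a` to `b` in a category `C`: families of bijections
`φ_{x•} : Hom(x, a) ≃ Hom(x, b)`, `φ_{•z} : Hom(a, z) ≃ Hom(b, z)` and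
`φ_{••} : Hom(a, a) ≃ Hom(b, b)` satisfying the coherence conditions of STATEMENT 1.
(Composition `g ∘ f` is written `f ≫ g`.) -/
structure Indisc (a b : C) : Type (max u v) where
  left : ∀ x : C, (x ⟶ a) ≃ (x ⟶ b)
  right : ∀ z : C, (a ⟶ z) ≃ (b ⟶ z)
  both : (a ⟶ a) ≃ (b ⟶ b)
  coh₁ : ∀ {x y : C} (f : x ⟶ y) (g : y ⟶ a), left x (f ≫ g) = f ≫ left y g
  coh₂ : ∀ {x z : C} (f : x ⟶ a) (g : a ⟶ z), left x f ≫ right z g = f ≫ g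
  coh₃ : ∀ {z w : C} (f : a ⟶ z) (g : z ⟶ w), right w (f ≫ g) = right z f ≫ g
  coh₄ : ∀ {x : C} (f : x ⟶ a) (g : a ⟶ a), left x (f ≫ g) = left x f ≫ both g
  coh₅ : ∀ {x : C} (f : a ⟶ x) (g : x ⟶ a), both (f ≫ g) = right x f ≫ left x g
  coh₆ : ∀ {x : C} (f : a ⟶ a) (g : a ⟶ x), right x (f ≫ g) = both f ≫ right x g
  coh₇ : ∀ f g : a ⟶ a, both (f ≫ g) = both f ≫ both g
  coh₈ : both (𝟙 a) = 𝟙 b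

/-- The map sending an isomorphism `φ : a ≅ b` to the triple of families
`(f ↦ φ.hom ∘ f, g ↦ g ∘ φ.inv, h ↦ φ.hom ∘ h ∘ φ.inv)`. -/
def isoToIndisc {a b : C} (φ : a ≅ b) : Indisc a b where
  left x :=
    { toFun := fun f => f ≫ φ.hom
      invFun := fun f => f ≫ φ.inv
      left_inv := fun f => by simp
      right_inv := fun f => by simp }
  right z :=
    { toFun := fun g => φ.inv ≫ g
      invFun := fun g => φ.hom ≫ g
      left_inv := fun g => by simp
      right_inv := fun g => by simp }
  both :=
    { toFun := fun h => φ.inv ≫ h ≫ φ.hom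
      invFun := fun h => φ.hom ≫ h ≫ φ.inv
      left_inv := fun h => by simp
      right_inv := fun h => by simp }
  coh₁ f g := by simp
  coh₂ f g := by simp
  coh₃ f g := by simp
  coh₄ f g := by simp
  coh₅ f g := by simp
  coh₆ f g := by simp
  coh₇ f g := by simp
  coh₈ := by simp

namespace Indisc

variable {a b : C}

@[ext]
theorem ext {I J : Indisc a b} (left_eq : ∀ (x : C) (f : x ⟶ a), I.left x f = J.left x f)
    (right_eq : ∀ (z : C) (g : a ⟶ z), I.right z g = J.right z g) : I = J := by
  have both_eq (h : a ⟶ a) : I.both h = J.both h := by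
    rw [← Category.id_comp h, I.coh₅, J.coh₅, left_eq, right_eq]
  cases I
  cases J
  simp only [mk.injEq]
  exact ⟨funext fun x => Equiv.ext (left_eq x), funext fun z => Equiv.ext (right_eq z),
    Equiv.ext both_eq⟩

variable (I : Indisc a b)

theorem comp_left_id {x : C} (f : x ⟶ a) : f ≫ I.left a (𝟙 a) = I.left x f := by
  rw [← I.coh₁, Category.comp_id]

theorem right_id_comp {z : C} (g : a ⟶ z) : I.right a (𝟙 a) ≫ g = I.right z g := by
  rw [← I.coh₃, Category.id_comp]

/-- The isomorphism underlying an indiscernibility, obtained as in the Yoneda lemma by evaluating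
`φ_{a•}` and `φ_{•a}` at the identity of `a`. -/
def toIso : a ≅ b where
  hom := I.left a (𝟙 a)
  inv := I.right a (𝟙 a)
  hom_inv_id := by rw [I.coh₂, Category.id_comp]
  inv_hom_id := by rw [← I.coh₅, Category.id_comp, I.coh₈]

theorem toIso_isoToIndisc (φ : a ≅ b) : (isoToIndisc φ).toIso = φ :=
  Iso.ext (Category.id_comp φ.hom)

theorem isoToIndisc_toIso : isoToIndisc I.toIso = I := by
  ext x f
  · exact I.comp_left_id f
  · exact I.right_id_comp f

end Indisc

/-- For any objects `a` and `b` of a category `C`, the map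
`isoToIndisc` is a bijection from the set of isomorphisms `a ≅ b` onto the set of
indiscernibilities from `a` to `b`. -/
theorem isoToIndisc_bijective (a b : C) :
    Function.Bijective (isoToIndisc (a := a) (b := b)) :=
  Function.bijective_iff_has_inverse.mpr
    ⟨Indisc.toIso, Indisc.toIso_isoToIndisc, Indisc.isoToIndisc_toIso⟩
end

section
/- Let 𝓛 be an inverse category of height p > 0, X : 𝓛 ⥤ Type a functor, and K an object of 𝓛 of rank n + 1. Every element z of the matching object M_K X determines the family α (the restriction of z to the fanout of K at 0) and an element z' of the matching object M_{(K,α)}(∂X), and the fiber of the matching map X K → M_K X over z is in bijection with the fiber of the matching map ∂X(K, α) → M_{(K,α)}(∂X) over z'. -/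
open CategoryTheory

universe w v u v₂ u₂ v₃ u₃

/-- An inverse category: a category equipped with a rank function such that every
morphism weakly decreases rank, and only identities preserve rank. -/
structure InverseRank (C : Type u) [Category.{v} C] where
  rk : C → ℕ
  rk_le : ∀ {K L : C} (f : K ⟶ L), rk L ≤ rk K
  rk_id : ∀ {K L : C} (f : K ⟶ L), rk L = rk K → ∃ h : K = L, f = eqToHom h

/-- An inverse category has height `p` if every object has rank `< p`. -/
def InverseRank.HasHeight {C : Type u} [Category.{v} C] (r : InverseRank C) (p : ℕ) : Prop :=
  ∀ K : C, r.rk K < p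

section

variable {C : Type u} [Category.{v} C]

/-- The objects of rank `m`. -/
abbrev RankObj (rk : C → ℕ) (m : ℕ) : Type u := {L : C // rk L = m}

/-- The fanout of `K` at `m`: pairs `(L, f)` with `L` of rank `m` and `f : K ⟶ L`. -/
abbrev Fanout (rk : C → ℕ) (K : C) (m : ℕ) : Type max u v :=
  Σ L : RankObj rk m, (K ⟶ L.1)

/-- An object of the derivative `∂_M 𝓛`: a pair `(K, α)` with `K` of positive rank
(i.e. of rank `n + 1` for some `n`) and `α` a section of `M` over the fanout of `K`
at `0`. -/
structure DerivObj (rk : C → ℕ) (M : RankObj rk 0 → Type w) : Type max u v w where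
  pt : C
  pos : 0 < rk pt
  sec : ∀ F : Fanout rk pt 0, M F.1

/-- The derivative category `∂_M 𝓛`: a morphism `(K₁, α₁) ⟶ (K₂, α₂)` is a morphism
`f : K₁ ⟶ K₂` of `𝓛` such that `α₁ (L, f ≫ g) = α₂ (L, g)` for every `(L, g)` in the
fanout of `K₂` at `0`. -/
instance derivCategory (rk : C → ℕ) (M : RankObj rk 0 → Type w) :
    Category (DerivObj rk M) where
  Hom A B := {f : A.pt ⟶ B.pt // ∀ F : Fanout rk B.pt 0, A.sec ⟨F.1, f ≫ F.2⟩ = B.sec F}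
  id A := ⟨𝟙 A.pt, fun F => by rw [Category.id_comp]⟩
  comp {A B Z} f g := ⟨f.1 ≫ g.1, fun F => by
    rw [Category.assoc]
    exact (f.2 ⟨F.1, g.1 ≫ F.2⟩).trans (g.2 F)⟩
  id_comp f := Subtype.ext (Category.id_comp f.1)
  comp_id f := Subtype.ext (Category.comp_id f.1)
  assoc f g h := Subtype.ext (Category.assoc f.1 g.1 h.1)

/-- The rank function of the derivative category: `rk (K, α) := rk K - 1`. -/
abbrev derivRk (rk : C → ℕ) (M : RankObj rk 0 → Type w) : DerivObj rk M → ℕ :=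
  fun A => rk A.pt - 1

end

section

variable {C : Type u} [Category.{v} C]

/-- The matching object `M_K X` of a diagram `X : 𝓛 ⥤ Type` at `K`: compatible
families `d` assigning to each `(L, f)` with `rk L < rk K` an element of `X L`. -/
structure MatchingObj (rk : C → ℕ) (X : C ⥤ Type w) (K : C) : Type max u v w where
  d : ∀ (L : C), rk L < rk K → (K ⟶ L) → X.obj L
  compat : ∀ {L₁ L₂ : C} (h₁ : rk L₁ < rk K) (h₂ : rk L₂ < rk K) (g : L₁ ⟶ L₂),
    rk L₂ < rk L₁ → ∀ f₁ : K ⟶ L₁, X.map g (d L₁ h₁ f₁) = d L₂ h₂ (f₁ ≫ g)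

/-- The matching map `X K → M_K X`, sending `x` to the family `(L, f) ↦ X(f)(x)`. -/
def matchMap (rk : C → ℕ) (X : C ⥤ Type w) (K : C) (x : X.obj K) : MatchingObj rk X K where
  d L _ f := X.map f x
  compat h₁ h₂ g hg f₁ := (FunctorToTypes.map_comp_apply X f₁ g x).symm

/-- The restriction `X₀` of a diagram `X : 𝓛 ⥤ Type` to the rank-`0` objects. -/
def diagRestrict (rk : C → ℕ) (X : C ⥤ Type w) : RankObj rk 0 → Type w :=
  fun L => X.obj L.1

/-- The induced diagram `∂X : ∂_{X₀}𝓛 ⥤ Type` on the derivative: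
`∂X (K, α) := { x : X K | X(f)(x) = α (L, f) for all (L, f) in the fanout of K at 0 }`. -/
def derivDiag (rk : C → ℕ) (X : C ⥤ Type w) :
    DerivObj rk (diagRestrict rk X) ⥤ Type w where
  obj A := {x : X.obj A.pt // ∀ F : Fanout rk A.pt 0, X.map F.2 x = A.sec F}
  map {A B} f := ↾fun x => ⟨X.map f.1 x.1, fun F => by
    rw [← FunctorToTypes.map_comp_apply]
    exact (x.2 ⟨F.1, f.1 ≫ F.2⟩).trans (f.2 F)⟩
  map_id A := by
    refine ConcreteCategory.hom_ext _ _ fun x => ?_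
    exact Subtype.ext (FunctorToTypes.map_id_apply X x.1)
  map_comp {A B Z} f g := by
    refine ConcreteCategory.hom_ext _ _ fun x => ?_
    exact Subtype.ext (FunctorToTypes.map_comp_apply X f.1 g.1 x.1)

end

section

variable {C : Type u} [Category.{v} C]

/-- The restriction of an element `z` of the matching object `M_K X` to the fanout
of `K` at `0`: the family `α`. -/
def matchSec (rk : C → ℕ) (X : C ⥤ Type w) (K : C) (hpos : 0 < rk K)
    (z : MatchingObj rk X K) : ∀ F : Fanout rk K 0, diagRestrict rk X F.1 :=
  fun F => z.d F.1.1 (by have h := F.1.2; omega) F.2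

/-- The object `(K, α)` of the derivative determined by an element of the matching
object `M_K X`. -/
def matchObjDeriv (rk : C → ℕ) (X : C ⥤ Type w) (K : C) (hpos : 0 < rk K)
    (z : MatchingObj rk X K) : DerivObj rk (diagRestrict rk X) :=
  ⟨K, hpos, matchSec rk X K hpos z⟩

/-- The element `z'` of the matching object `M_{(K,α)}(∂X)` determined by an element
`z` of the matching object `M_K X`. -/
def derivedMatching (rk : C → ℕ) (X : C ⥤ Type w) (K : C) (hpos : 0 < rk K)
    (z : MatchingObj rk X K) :
    MatchingObj (fun A : DerivObj rk (diagRestrict rk X) => rk A.pt - 1)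
      (derivDiag rk X) (matchObjDeriv rk X K hpos z) where
  d B hB f :=
    have hpt : (matchObjDeriv rk X K hpos z).pt = K := rfl
    have hB' : rk B.pt < rk K := by rw [hpt] at hB; have h1 := B.pos; omega
    ⟨z.d B.pt hB' f.1, fun F => by
      have h2 := z.compat (L₁ := B.pt) (L₂ := F.1.1) hB'
        (by have h3 := F.1.2; omega) F.2 (by have h3 := F.1.2; have h1 := B.pos; omega) f.1
      exact h2.trans (f.2 F)⟩
  compat {B₁ B₂} h₁ h₂ g hg f₁ := by
    have hpt : (matchObjDeriv rk X K hpos z).pt = K := rfl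
    rw [hpt] at h₁ h₂
    apply Subtype.ext
    exact z.compat (by have := B₁.pos; omega) (by have := B₂.pos; omega) g.1
      (by have := B₁.pos; have := B₂.pos; omega) f₁.1

end

/-!
A morphism out of `(K, α)` in the derivative is a morphism `f : K ⟶ L` of `𝓛` with `rk L > 0`:
the section over `L` is forced to be `α` precomposed with `f`. So the fanout of `K` splits into
its rank-`0` part, which is where membership in `∂X (K, α)` is tested, and its positive-rank part,
which is the fanout of `(K, α)`. Hence, for `x : X K`, lying over `z` means exactly lying in
`∂X (K, α)` and there lying over `z'`.
-/

section

variable {C : Type u} [Category.{v} C] {rk : C → ℕ}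

namespace DerivObj

variable {M : RankObj rk 0 → Type w}

/-- The pushforward `(L, f_* α)` of an object `(K, α)` of the derivative along a morphism
`f : K ⟶ L` with `L` of positive rank, where `(f_* α)(N, g) = α (N, f ≫ g)`: the only
object over `L` to which `f` lifts. -/
def pushforward (A : DerivObj rk M) {L : C} (hL : 0 < rk L) (f : A.pt ⟶ L) : DerivObj rk M where
  pt := L
  pos := hL
  sec F := A.sec ⟨F.1, f ≫ F.2⟩

/-- The canonical lift of `f : K ⟶ L` to a morphism `(K, α) ⟶ (L, f_* α)` of the derivative,
turning fanout elements of `K` of positive rank into fanout elements of `(K, α)`. -/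
def toPushforward (A : DerivObj rk M) {L : C} (hL : 0 < rk L) (f : A.pt ⟶ L) :
    A ⟶ A.pushforward hL f :=
  ⟨f, fun _ => rfl⟩

end DerivObj

attribute [ext] MatchingObj

theorem matchMap_eq_iff {X : C ⥤ Type w} {K : C} {x : X.obj K} {z : MatchingObj rk X K} :
    matchMap rk X K x = z ↔ ∀ (L : C) (hL : rk L < rk K) (f : K ⟶ L), X.map f x = z.d L hL f := by
  simp only [MatchingObj.ext_iff, funext_iff, matchMap]

theorem matchMap_derivDiag_eq_derivedMatching_iff {X : C ⥤ Type w} {K : C} {hK : 0 < rk K}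
    {z : MatchingObj rk X K} {y : (derivDiag rk X).obj (matchObjDeriv rk X K hK z)} :
    matchMap (derivRk rk (diagRestrict rk X)) (derivDiag rk X) (matchObjDeriv rk X K hK z) y =
        derivedMatching rk X K hK z ↔
      ∀ (L : C) (hL : rk L < rk K) (f : K ⟶ L), 0 < rk L → X.map f y.1 = z.d L hL f := by
  rw [matchMap_eq_iff]
  constructor
  · intro h L hL f hpos
    have hlt : rk L - 1 < rk K - 1 := Nat.sub_lt_sub_right hpos hL
    exact congrArg Subtype.val (h _ hlt ((matchObjDeriv rk X K hK z).toPushforward hpos f))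
  · intro h B hB f
    have hlt : rk B.pt < rk K := lt_of_tsub_lt_tsub_right hB
    exact Subtype.ext (h B.pt hlt f.1 B.pos)

theorem matchMap_eq_iff_exists_matchMap_derivDiag_eq {X : C ⥤ Type w} {K : C} (hK : 0 < rk K)
    {x : X.obj K} {z : MatchingObj rk X K} :
    matchMap rk X K x = z ↔
      ∃ hx : ∀ F : Fanout rk K 0, X.map F.2 x = matchSec rk X K hK z F,
        matchMap (derivRk rk (diagRestrict rk X)) (derivDiag rk X) (matchObjDeriv rk X K hK z)
          ⟨x, hx⟩ = derivedMatching rk X K hK z := by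
  rw [matchMap_eq_iff]
  constructor
  · intro h
    exact ⟨fun F => h F.1.1 (F.1.2.trans_lt hK) F.2,
      matchMap_derivDiag_eq_derivedMatching_iff.mpr fun L hL f _ => h L hL f⟩
  · rintro ⟨hzero, hderiv⟩ L hL f
    obtain hL₀ | hL₀ := Nat.eq_zero_or_pos (rk L)
    · exact hzero ⟨⟨L, hL₀⟩, f⟩
    · exact matchMap_derivDiag_eq_derivedMatching_iff.mp hderiv L hL f hL₀

theorem matching_fiber_equiv_general (X : C ⥤ Type w) (K : C) (hK : 0 < rk K)
    (z : MatchingObj rk X K) :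
    ∃ e : {x : X.obj K // matchMap rk X K x = z} ≃
        {y : (derivDiag rk X).obj (matchObjDeriv rk X K hK z) //
          matchMap (derivRk rk (diagRestrict rk X)) (derivDiag rk X)
            (matchObjDeriv rk X K hK z) y = derivedMatching rk X K hK z},
      ∀ x, (e x).1.1 = x.1 := by
  have fiber_iff (x : X.obj K) :=
    matchMap_eq_iff_exists_matchMap_derivDiag_eq hK (x := x) (z := z)
  exact ⟨{
    toFun x := ⟨⟨x.1, ((fiber_iff x.1).mp x.2).fst⟩, ((fiber_iff x.1).mp x.2).snd⟩
    invFun y := ⟨y.1.1, (fiber_iff y.1.1).mpr ⟨y.1.2, y.2⟩⟩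
    left_inv _ := rfl
    right_inv _ := rfl }, fun _ => rfl⟩

end

/-- Let `𝓛` be an inverse category of height `p > 0`, `X : 𝓛 ⥤ Type` a
functor, and `K` an object of rank `n + 1`.  Every element `z` of the matching object
`M_K X` determines the family `α` (its restriction to the fanout of `K` at `0`) and
an element `z'` of the matching object `M_{(K,α)}(∂X)`, and the fiber of the matching
map `X K → M_K X` over `z` is in bijection with the fiber of the matching map
`∂X (K, α) → M_{(K,α)}(∂X)` over `z'`. -/
theorem matching_fiber_equiv {C : Type u} [Category.{v} C] (r : InverseRank C)
    (p : ℕ) (hp : 0 < p) (hh : r.HasHeight p) (X : C ⥤ Type w) (K : C) (n : ℕ)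
    (hK : r.rk K = n + 1) (z : MatchingObj r.rk X K) :
    Nonempty
      ({x : X.obj K // matchMap r.rk X K x = z} ≃
        {y : (derivDiag r.rk X).obj (matchObjDeriv r.rk X K (by omega) z) //
          matchMap (fun A : DerivObj r.rk (diagRestrict r.rk X) => r.rk A.pt - 1)
            (derivDiag r.rk X) (matchObjDeriv r.rk X K (by omega) z) y
            = derivedMatching r.rk X K (by omega) z}) := by
  obtain ⟨e, -⟩ := matching_fiber_equiv_general X K (by omega) z
  exact ⟨e⟩
end

section
/- Let F : 𝓛 ⥤ 𝓜 be a discrete opfibration between inverse categories of height p > 0 and X : 𝓜 ⥤ Type a functor. Write X₀ for the restriction of X to 𝓜(0) and F₀ for the restriction of F to rank-0 objects. Then the restriction of the composite F ⋙ X to 𝓛(0) equals X₀ ∘ F₀, and there is a natural isomorphism between the induced diagram ∂(F ⋙ X) : ∂_{X₀ ∘ F₀}𝓛 ⥤ Type and the composite of the derived functor ∂_{F, id} : ∂_{X₀ ∘ F₀}𝓛 ⥤ ∂_{X₀}𝓜 with ∂X : ∂_{X₀}𝓜 ⥤ Type. -/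
open CategoryTheory

universe w v u v₂ u₂ v₃ u₃

section

variable {C : Type u} [Category.{v} C] {D : Type u₂} [Category.{v₂} D]
  {E : Type u₃} [Category.{v₃} E]

/-- A functor between inverse categories is rank-preserving if `rk (F K) = rk K`. -/
def RankPres (F : C ⥤ D) (rkC : C → ℕ) (rkD : D → ℕ) : Prop :=
  ∀ K : C, rkD (F.obj K) = rkC K

/-- The induced map on fanouts of a rank-preserving functor, sending `(L, f)` to
`(F L, F f)`. -/
def fanoutMap (F : C ⥤ D) {rkC : C → ℕ} {rkD : D → ℕ} (hF : RankPres F rkC rkD)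
    (K : C) (m : ℕ) : Fanout rkC K m → Fanout rkD (F.obj K) m :=
  fun G => ⟨⟨F.obj G.1.1, (hF G.1.1).trans G.1.2⟩, F.map G.2⟩

/-- A rank-preserving functor is a discrete opfibration if all its induced maps on
fanouts (at `m < rk K`) are bijections. -/
structure IsDiscOpfib (F : C ⥤ D) (rkC : C → ℕ) (rkD : D → ℕ) : Prop where
  pres : RankPres F rkC rkD
  bij : ∀ (K : C) (m : ℕ), m < rkC K → Function.Bijective (fanoutMap F pres K m)

/-- The fanout bijection of a discrete opfibration, as an equivalence. -/
noncomputable def fanoutEquiv (F : C ⥤ D) {rkC : C → ℕ} {rkD : D → ℕ}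
    (hF : IsDiscOpfib F rkC rkD) (K : C) (m : ℕ) (hm : m < rkC K) :
    Fanout rkC K m ≃ Fanout rkD (F.obj K) m :=
  Equiv.ofBijective _ (hF.bij K m hm)

theorem isDiscOpfib_id (rk : C → ℕ) : IsDiscOpfib (𝟭 C) rk rk := by
  refine ⟨fun _ => rfl, fun K m hm => ?_⟩
  exact Function.bijective_id

theorem isDiscOpfib_comp {F : C ⥤ D} {G : D ⥤ E} {rkC : C → ℕ} {rkD : D → ℕ}
    {rkE : E → ℕ} (hF : IsDiscOpfib F rkC rkD) (hG : IsDiscOpfib G rkD rkE) :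
    IsDiscOpfib (F ⋙ G) rkC rkE := by
  refine ⟨fun K => (hG.pres (F.obj K)).trans (hF.pres K), fun K m hm => ?_⟩
  exact (hG.bij (F.obj K) m (by rw [hF.pres]; exact hm)).comp (hF.bij K m hm)

end

theorem secHEq {α : Sort*} {P : α → Sort*} (s : ∀ a, P a) {a b : α} (h : a = b) :
    HEq (s a) (s b) := by rw [h]

section

variable {C : Type u} [Category.{v} C] {D : Type u₂} [Category.{v₂} D]

/-- The section part of the object map of the derived functor `∂_{H,h}`:
`β F := h (α (H⁻¹ F))`, where `H⁻¹` is the inverse of the fanout bijection of `H`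
at rank `0`. -/
noncomputable def derivedSec (H : C ⥤ D) {rkC : C → ℕ} {rkD : D → ℕ}
    (hH : IsDiscOpfib H rkC rkD)
    (L₀ : RankObj rkC 0 → Type w) (M₀ : RankObj rkD 0 → Type w)
    (h : ∀ K : RankObj rkC 0, L₀ K → M₀ ⟨H.obj K.1, (hH.pres K.1).trans K.2⟩)
    (A : DerivObj rkC L₀) : ∀ F : Fanout rkD (H.obj A.pt) 0, M₀ F.1 :=
  Equiv.piCongrLeft (fun F : Fanout rkD (H.obj A.pt) 0 => M₀ F.1)
    (fanoutEquiv H hH A.pt 0 A.pos) (fun G => h G.1 (A.sec G))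

theorem derivedSec_apply (H : C ⥤ D) {rkC : C → ℕ} {rkD : D → ℕ}
    (hH : IsDiscOpfib H rkC rkD)
    (L₀ : RankObj rkC 0 → Type w) (M₀ : RankObj rkD 0 → Type w)
    (h : ∀ K : RankObj rkC 0, L₀ K → M₀ ⟨H.obj K.1, (hH.pres K.1).trans K.2⟩)
    (A : DerivObj rkC L₀) (G : Fanout rkC A.pt 0) :
    derivedSec H hH L₀ M₀ h A (fanoutEquiv H hH A.pt 0 A.pos G) = h G.1 (A.sec G) :=
  Equiv.piCongrLeft_apply_apply _ _ _ _

/-- The derived functor `∂_{H,h} : ∂_{L₀}𝓛 ⥤ ∂_{M₀}𝓜` of a discrete opfibration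
`H : 𝓛 ⥤ 𝓜` together with a family of functions `h_K : L₀ K → M₀ (H K)`: it sends
`(K, α)` to `(H K, β)` where `β F := h (α (H⁻¹ F))`, using the inverse of the fanout
bijection of `H` at rank `0`, and sends `(f, φ)` to `(H f, ψ)`. -/
noncomputable def derivedFunctor (H : C ⥤ D) {rkC : C → ℕ} {rkD : D → ℕ}
    (hH : IsDiscOpfib H rkC rkD)
    (L₀ : RankObj rkC 0 → Type w) (M₀ : RankObj rkD 0 → Type w)
    (h : ∀ K : RankObj rkC 0, L₀ K → M₀ ⟨H.obj K.1, (hH.pres K.1).trans K.2⟩) :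
    DerivObj rkC L₀ ⥤ DerivObj rkD M₀ where
  obj A :=
    { pt := H.obj A.pt
      pos := by rw [hH.pres]; exact A.pos
      sec := derivedSec H hH L₀ M₀ h A }
  map {A B} f := ⟨H.map f.1, by
    intro F
    obtain ⟨G, rfl⟩ := (fanoutEquiv H hH B.pt 0 B.pos).surjective F
    have key : (⟨(fanoutEquiv H hH B.pt 0 B.pos G).1,
          H.map f.1 ≫ (fanoutEquiv H hH B.pt 0 B.pos G).2⟩ : Fanout rkD (H.obj A.pt) 0)
        = fanoutEquiv H hH A.pt 0 A.pos ⟨G.1, f.1 ≫ G.2⟩ := by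
      show (⟨⟨H.obj G.1.1, (hH.pres G.1.1).trans G.1.2⟩, H.map f.1 ≫ H.map G.2⟩ :
          Fanout rkD (H.obj A.pt) 0) = ⟨⟨H.obj G.1.1, (hH.pres G.1.1).trans G.1.2⟩,
          H.map (f.1 ≫ G.2)⟩
      rw [H.map_comp]
    have h1 := secHEq (derivedSec H hH L₀ M₀ h A) key
    have h2 := derivedSec_apply H hH L₀ M₀ h A ⟨G.1, f.1 ≫ G.2⟩
    have h3 := derivedSec_apply H hH L₀ M₀ h B G
    have h4 : h G.1 (A.sec ⟨G.1, f.1 ≫ G.2⟩) = h G.1 (B.sec G) := congrArg (h G.1) (f.2 G)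
    exact eq_of_heq (h1.trans (heq_of_eq (h2.trans (h4.trans h3.symm))))⟩
  map_id A := Subtype.ext (H.map_id A.pt)
  map_comp f g := Subtype.ext (H.map_comp f.1 g.1)

end

/-- The action of a rank-preserving functor on rank-0 objects. -/
def rankZeroMap {C : Type u} [Category.{v} C] {D : Type u₂} [Category.{v₂} D]
    (F : C ⥤ D) {rkC : C → ℕ} {rkD : D → ℕ} (hF : RankPres F rkC rkD) :
    RankObj rkC 0 → RankObj rkD 0 :=
  fun L => ⟨F.obj L.1, (hF L.1).trans L.2⟩

/-! Both diagrams send `(K, α)` to a set of elements `x` of `X (F K)`: one asks that `x` restrict to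
`α` along the fanout of `K`, the other that it restrict to `α ∘ F⁻¹` along the fanout of `F K`.
The fanout bijection of `F` turns either condition into the other, so the identity of `X (F K)`
induces a bijection; it is natural because both actions are given by `X (F f)`. -/

section

variable {C : Type u} [Category.{v} C] {D : Type u₂} [Category.{v₂} D] {rkC : C → ℕ} {rkD : D → ℕ}

theorem diagRestrict_comp (F : C ⥤ D) (hF : RankPres F rkC rkD) (X : D ⥤ Type w) :
    diagRestrict rkC (F ⋙ X) = diagRestrict rkD X ∘ rankZeroMap F hF :=
  rfl

theorem forall_eq_derivedSec_iff (H : C ⥤ D) (hH : IsDiscOpfib H rkC rkD)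
    (L₀ : RankObj rkC 0 → Type w) (M₀ : RankObj rkD 0 → Type w)
    (h : ∀ K : RankObj rkC 0, L₀ K → M₀ (rankZeroMap H hH.pres K))
    (A : DerivObj rkC L₀) (β : ∀ G : Fanout rkD (H.obj A.pt) 0, M₀ G.1) :
    (∀ G, β G = derivedSec H hH L₀ M₀ h A G) ↔
      ∀ G, β (fanoutMap H hH.pres A.pt 0 G) = h G.1 (A.sec G) :=
  (fanoutEquiv H hH A.pt 0 A.pos).surjective.forall.trans <|
    forall_congr' fun G => Eq.congr_right (derivedSec_apply H hH L₀ M₀ h A G)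

variable (F : C ⥤ D) (hF : IsDiscOpfib F rkC rkD) (X : D ⥤ Type w)

/-- The derived functor `∂_{F, id} : ∂_{X₀ ∘ F₀}𝓛 ⥤ ∂_{X₀}𝓜`, with its domain written as
`∂_{(F ⋙ X)₀}𝓛` so that it is literally the domain of `∂(F ⋙ X)`. -/
noncomputable abbrev derivedFunctorId :
    DerivObj rkC (diagRestrict rkC (F ⋙ X)) ⥤ DerivObj rkD (diagRestrict rkD X) :=
  derivedFunctor F hF (diagRestrict rkC (F ⋙ X)) (diagRestrict rkD X) fun _ x => x

/-- The bijection `∂(F ⋙ X) A ≃ ∂X (∂_{F, id} A)` that is the identity on underlying elements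
of `X (F K)`, where `A = (K, α)`. -/
noncomputable def derivDiagCompEquiv (A : DerivObj rkC (diagRestrict rkC (F ⋙ X))) :
    (derivDiag rkC (F ⋙ X)).obj A ≃ (derivDiag rkD X).obj ((derivedFunctorId F hF X).obj A) :=
  Equiv.subtypeEquivRight fun x =>
    (forall_eq_derivedSec_iff F hF (diagRestrict rkC (F ⋙ X)) (diagRestrict rkD X) (fun _ y => y) A
      fun G => X.map G.2 x).symm

/-- The natural isomorphism `∂(F ⋙ X) ≅ ∂_{F, id} ⋙ ∂X`: induced diagrams are stable under
restriction along a discrete opfibration. -/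
noncomputable def derivDiagCompIso :
    derivDiag rkC (F ⋙ X) ≅ derivedFunctorId F hF X ⋙ derivDiag rkD X :=
  NatIso.ofComponents (fun A => (derivDiagCompEquiv F hF X A).toIso) fun _ =>
    ConcreteCategory.hom_ext _ _ fun _ => rfl

theorem derivDiag_comp_discOpfib_general :
    (diagRestrict rkC (F ⋙ X) = diagRestrict rkD X ∘ rankZeroMap F hF.pres) ∧
      Nonempty
        (derivDiag rkC (F ⋙ X) ≅
          derivedFunctor F hF (diagRestrict rkC (F ⋙ X)) (diagRestrict rkD X) (fun _ x => x) ⋙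
            derivDiag rkD X) :=
  ⟨diagRestrict_comp F hF.pres X, ⟨derivDiagCompIso F hF X⟩⟩

end

/-- Let `F : 𝓛 ⥤ 𝓜` be a discrete opfibration between inverse
categories of height `p > 0` and `X : 𝓜 ⥤ Type` a functor.  Then the restriction of
`F ⋙ X` to `𝓛(0)` equals `X₀ ∘ F₀`, and there is a natural isomorphism between the
induced diagram `∂(F ⋙ X) : ∂_{X₀ ∘ F₀}𝓛 ⥤ Type` and the composite of the derived
functor `∂_{F, id} : ∂_{X₀ ∘ F₀}𝓛 ⥤ ∂_{X₀}𝓜` with `∂X : ∂_{X₀}𝓜 ⥤ Type`. -/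
theorem derivDiag_comp_discOpfib {C : Type u} [Category.{v} C] {D : Type u₂}
    [Category.{v₂} D] (r : InverseRank C) (s : InverseRank D) (p : ℕ) (hp : 0 < p)
    (hhr : r.HasHeight p) (hhs : s.HasHeight p) (F : C ⥤ D)
    (hF : IsDiscOpfib F r.rk s.rk) (X : D ⥤ Type w) :
    (diagRestrict r.rk (F ⋙ X) = diagRestrict s.rk X ∘ rankZeroMap F hF.pres) ∧
      Nonempty
        (derivDiag r.rk (F ⋙ X) ≅
          derivedFunctor F hF (diagRestrict r.rk (F ⋙ X)) (diagRestrict s.rk X)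
              (fun _ x => x) ⋙
            derivDiag s.rk X) :=
  derivDiag_comp_discOpfib_general F hF X
end
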